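/- Let β > 2 and 0 < κ < 1/2, and let (α_N) satisfy α_N > 0. For every δ > 0 there exist c_δ > 0 and N₀ such that for all even N ≥ N₀, all admissible pairs (μ₁, μ₂) ∈ A_κ^N, and every ε ∈ {0,1}^{B₁} with M_N := ∑_{i∈B₁} ε_i ≥ 1, writing S_ε(σ) := ∑_{i∈B₁} ε_i σᵢ σ_{i+N/2}, one has exp(α_N M_N μ₁μ₂ − δ α_N M_N)·(1 − exp(−c_δ M_N)) ≤ E_{ν_N^{μ₁,μ₂}}[exp(α_N S_ε)] ≤ exp(α_N M_N μ₁μ₂ + δ α_N M_N) + exp(α_N M_N − c_δ M_N). -/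

import Mathlib

open MeasureTheory Filter

noncomputable section

/-- The spin value ±1 associated to a Boolean. -/
def spinVal (s : Bool) : ℝ := if s then 1 else -1

/-- A spin configuration on `N = 2n` sites, split into the two blocks
`B₁` (first component) and `B₂` (second component); the perfect matching
pairs the `i`-th spin of `B₁` with the `i`-th spin of `B₂`. -/
abbrev TwoConf (n : ℕ) := (Fin n → Bool) × (Fin n → Bool)

/-- Block magnetization `m₁(σ) = (2/N) ∑_{i ∈ B₁} σᵢ` with `N = 2n`. -/
def mag1 (n : ℕ) (σ : TwoConf n) : ℝ := (2 / (2 * n : ℝ)) * ∑ i, spinVal (σ.1 i)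

/-- Block magnetization `m₂(σ) = (2/N) ∑_{i ∈ B₂} σᵢ` with `N = 2n`. -/
def mag2 (n : ℕ) (σ : TwoConf n) : ℝ := (2 / (2 * n : ℝ)) * ∑ i, spinVal (σ.2 i)

/-- Membership in the typical set `A_κ^N ⊆ [−1,1]²`: the union over sign choices
`s₁, s₂ ∈ {+,−}` of the open squares of half-width `N^{−κ}` centered at
`(m^{s₁}(β/2), m^{s₂}(β/2))`, where `mp = m⁺(β/2)` and `m⁻(β/2) = −mp`. -/
def memTyp (mp κ : ℝ) (N : ℕ) (x : ℝ × ℝ) : Prop :=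
  ∃ s₁ s₂ : Bool,
    |x.1 - (if s₁ then mp else -mp)| < (N : ℝ) ^ (-κ) ∧
    |x.2 - (if s₂ then mp else -mp)| < (N : ℝ) ^ (-κ)

/-- The pair `(μ₁, μ₂)` is admissible for system size `N`: both `N(1+μ₁)/4` and
`N(1+μ₂)/4` are natural numbers. -/
def admissible (N : ℕ) (μ₁ μ₂ : ℝ) : Prop :=
  (∃ k : ℕ, (N : ℝ) * (1 + μ₁) / 4 = k) ∧ ∃ k : ℕ, (N : ℝ) * (1 + μ₂) / 4 = k

/-- The probability of the event `A` under the uniform measure `ν_N^{μ₁,μ₂}` on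
`Ω_N(μ₁,μ₂) = {σ : m₁(σ) = μ₁, m₂(σ) = μ₂}` (with `N = 2n`). -/
def nuProb (n : ℕ) (μ₁ μ₂ : ℝ) (A : Set (TwoConf n)) : ℝ :=
  (∑ σ : TwoConf n,
      ({σ : TwoConf n | mag1 n σ = μ₁ ∧ mag2 n σ = μ₂} ∩ A).indicator
        (fun _ => (1 : ℝ)) σ) /
    ∑ σ : TwoConf n,
      {σ : TwoConf n | mag1 n σ = μ₁ ∧ mag2 n σ = μ₂}.indicator (fun _ => (1 : ℝ)) σ

/-- The expectation of `g` under the uniform measure `ν_N^{μ₁,μ₂}` on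
`Ω_N(μ₁,μ₂)` (with `N = 2n`). -/
def nuExp (n : ℕ) (μ₁ μ₂ : ℝ) (g : TwoConf n → ℝ) : ℝ :=
  (∑ σ : TwoConf n, {σ : TwoConf n | mag1 n σ = μ₁ ∧ mag2 n σ = μ₂}.indicator g σ) /
    ∑ σ : TwoConf n,
      {σ : TwoConf n | mag1 n σ = μ₁ ∧ mag2 n σ = μ₂}.indicator (fun _ => (1 : ℝ)) σ

/-!
Under `ν_N` the two blocks are independent, and each is uniform over a slice of the cube
`{±1}^{N/2}` with prescribed magnetization. On such a slice the correlations of the variables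
`1 + σᵢ` are dominated by those of independent spins of the same mean (Hoeffding's comparison of
sampling without and with replacement), so sums of spins are sub-Gaussian. Fixing the first block,
the overlap `S_ε` is a difference of two such sums, one over the sites with `σᵢ = 1` and one over
those with `σᵢ = -1`, which Cauchy–Schwarz decouples; averaging over the first block gives
`E[exp (t S_ε)] ≤ exp (M (t μ₁ μ₂ + 3 t² / 2))` for every real `t`. The upper bound follows by
splitting according to whether `S_ε ≤ M (μ₁ μ₂ + δ)` and using this estimate at `t = δ / 3`. The
lower bound is Jensen's inequality, since `E[S_ε] = M μ₁ μ₂`.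
-/

section SpinValue

lemma abs_spinVal (s : Bool) : |spinVal s| = 1 := by
  cases s <;> simp [spinVal]

lemma spinVal_not (s : Bool) : spinVal (!s) = -spinVal s := by
  cases s <;> simp [spinVal]

lemma one_add_spinVal_nonneg (s : Bool) : 0 ≤ 1 + spinVal s := by
  linarith [neg_abs_le (spinVal s), abs_spinVal s]

lemma one_add_spinVal_mul_self (s : Bool) :
    (1 + spinVal s) * (1 + spinVal s) = 2 * (1 + spinVal s) := by
  cases s <;> norm_num [spinVal]

lemma exp_mul_spinVal (t : ℝ) (s : Bool) :
    Real.exp (t * spinVal s) = Real.sinh t * (1 + spinVal s) + Real.exp (-t) := by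
  cases s
  · simp [spinVal]
  · simp only [spinVal, if_true, Real.sinh_eq]
    ring_nf

end SpinValue

/-- Hoeffding's lemma for a random spin: the left-hand side is the moment generating function at `t`
of a spin with mean `μ`. -/
lemma cosh_add_mul_sinh_le_exp {μ : ℝ} (hμ : |μ| ≤ 1) (t : ℝ) :
    Real.cosh t + μ * Real.sinh t ≤ Real.exp (t * μ + t ^ 2 / 2) := by
  obtain ⟨hμ₀, hμ₁⟩ := abs_le.1 hμ
  let p : unitInterval := ⟨(1 + μ) / 2, by linarith, by linarith⟩
  let P : Measure Bool := ProbabilityTheory.bernoulliMeasure true false p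
  have integral_P (g : Bool → ℝ) :
      ∫ s, g s ∂P = (1 + μ) / 2 * g true + (1 - μ) / 2 * g false := by
    simp only [P, ProbabilityTheory.integral_bernoulliMeasure, smul_eq_mul, p]
    ring
  have mean_P : ∫ s, spinVal s ∂P = μ := by
    rw [integral_P]
    norm_num [spinVal]
    ring
  have hoeffding := (ProbabilityTheory.hasSubgaussianMGF_of_mem_Icc (μ := P) (X := spinVal)
    Measurable.of_discrete.aemeasurable
    (ae_of_all _ fun s ↦ abs_le.1 (abs_spinVal s).le)).mgf_le t
  have centered : Real.exp (-(t * μ)) * (Real.cosh t + μ * Real.sinh t) ≤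
      Real.exp (t ^ 2 / 2) := by
    convert hoeffding using 1
    · rw [mean_P, ProbabilityTheory.mgf, integral_P, Real.cosh_eq, Real.sinh_eq]
      simp only [spinVal, if_true, Bool.false_eq_true, if_false, sub_eq_add_neg, mul_add,
        mul_one, mul_neg, Real.exp_add]
      ring
    · norm_num
  rwa [Real.exp_neg, inv_mul_le_iff₀ (Real.exp_pos _), ← Real.exp_add] at centered

lemma exp_mul_le_add_exp {a t x y z : ℝ} (ha : 0 ≤ a) (ht : 0 ≤ t) (hx : x ≤ z) :
    Real.exp (a * x) ≤ Real.exp (a * y) + Real.exp (a * z - t * y) * Real.exp (t * x) := by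
  rw [← Real.exp_add]
  rcases le_total x y with h | h
  · exact (Real.exp_le_exp.2 (mul_le_mul_of_nonneg_left h ha)).trans
      (le_add_of_nonneg_right (Real.exp_pos _).le)
  · refine (Real.exp_le_exp.2 ?_).trans (le_add_of_nonneg_left (Real.exp_pos _).le)
    linarith [mul_le_mul_of_nonneg_left hx ha, mul_le_mul_of_nonneg_left h ht]

section MagnetizationSlice

open Finset
open scoped BigOperators

variable {ι : Type*} [Fintype ι] [DecidableEq ι] {μ : ℝ}

/-- The configurations of a single block with sites `ι` whose magnetization is `μ`. The uniform
average over it is written `𝔼 f ∈ magSlice ι μ, _`. -/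
def magSlice (ι : Type*) [Fintype ι] [DecidableEq ι] (μ : ℝ) : Finset (ι → Bool) :=
  {f | 𝔼 i, spinVal (f i) = μ}

lemma mem_magSlice {f : ι → Bool} : f ∈ magSlice ι μ ↔ 𝔼 i, spinVal (f i) = μ := by
  simp [magSlice]

lemma sum_spinVal_of_mem_magSlice {f : ι → Bool} (hf : f ∈ magSlice ι μ) :
    ∑ i, spinVal (f i) = Fintype.card ι * μ := by
  rw [← mem_magSlice.1 hf, ← Fintype.card_smul_expect, nsmul_eq_mul]

lemma abs_le_one_of_mem_magSlice {f : ι → Bool} (hf : f ∈ magSlice ι μ) : |μ| ≤ 1 := by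
  rw [← mem_magSlice.1 hf]
  calc |𝔼 i, spinVal (f i)| ≤ 𝔼 i, |spinVal (f i)| := abs_expect_le _ _
    _ = 𝔼 _i : ι, (1 : ℝ) := by simp only [abs_spinVal]
    _ ≤ 1 := by
      cases isEmpty_or_nonempty ι <;> simp

lemma magSlice_nonempty [Nonempty ι] {k : ℕ} (hk : Fintype.card ι * (1 + μ) / 2 = k)
    (hμ : μ ≤ 1) : (magSlice ι μ).Nonempty := by
  have card_pos : (0 : ℝ) < Fintype.card ι := mod_cast Fintype.card_pos
  have k_le : k ≤ Fintype.card ι := by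
    suffices (k : ℝ) ≤ Fintype.card ι by exact_mod_cast this
    nlinarith [card_pos]
  obtain ⟨s, -, hs⟩ := exists_subset_card_eq (s := (univ : Finset ι)) k_le
  refine ⟨fun i ↦ decide (i ∈ s), mem_magSlice.2 ?_⟩
  have spin_eq (i : ι) : spinVal (decide (i ∈ s)) = 2 * (if i ∈ s then 1 else 0) - 1 := by
    by_cases hi : i ∈ s <;> norm_num [spinVal, hi]
  have sum_eq : ∑ i, spinVal (decide (i ∈ s)) = 2 * k - Fintype.card ι := by
    simp [spin_eq, hs, mul_comm]
  rw [Fintype.expect_eq_sum_div_card, sum_eq, ← hk]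
  field_simp
  ring

lemma expect_magSlice_comp_equiv (e : ι ≃ ι) (φ : (ι → Bool) → ℝ) :
    𝔼 f ∈ magSlice ι μ, φ (f ∘ e) = 𝔼 f ∈ magSlice ι μ, φ f := by
  refine expect_equiv (e.symm.arrowCongr (Equiv.refl Bool)) (fun f ↦ ?_) fun f _ ↦ rfl
  rw [mem_magSlice, mem_magSlice, ← Fintype.expect_equiv e (fun i ↦ spinVal (f (e i)))
    (fun i ↦ spinVal (f i)) fun _ ↦ rfl]
  rfl

lemma expect_magSlice_neg (φ : (ι → Bool) → ℝ) :
    𝔼 f ∈ magSlice ι (-μ), φ f = 𝔼 f ∈ magSlice ι μ, φ fun i ↦ !f i := by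
  refine expect_nbij' (fun f i ↦ !f i) (fun f i ↦ !f i) ?_ ?_ ?_ ?_ ?_ <;>
    simp +contextual [mem_magSlice, spinVal_not, expect_neg_distrib]

lemma expect_spinVal (hne : (magSlice ι μ).Nonempty) (a : ι) :
    𝔼 f ∈ magSlice ι μ, spinVal (f a) = μ := by
  have : Nonempty ι := ⟨a⟩
  have exchangeable (i : ι) :
      𝔼 f ∈ magSlice ι μ, spinVal (f i) = 𝔼 f ∈ magSlice ι μ, spinVal (f a) := by
    simpa using expect_magSlice_comp_equiv (μ := μ) (Equiv.swap a i) fun f ↦ spinVal (f a)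
  calc 𝔼 f ∈ magSlice ι μ, spinVal (f a)
      = 𝔼 i, 𝔼 f ∈ magSlice ι μ, spinVal (f i) := by
        simp only [exchangeable, Fintype.expect_const]
    _ = 𝔼 f ∈ magSlice ι μ, 𝔼 i, spinVal (f i) := expect_comm _ _ _
    _ = 𝔼 _f ∈ magSlice ι μ, μ := expect_congr rfl fun f hf ↦ mem_magSlice.1 hf
    _ = μ := expect_const hne μ

lemma expect_prod_insert_eq {F : Finset ι} {a b : ι} (ha : a ∉ F) (hb : b ∉ F) :
    𝔼 f ∈ magSlice ι μ, ∏ i ∈ insert b F, (1 + spinVal (f i)) =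
      𝔼 f ∈ magSlice ι μ, ∏ i ∈ insert a F, (1 + spinVal (f i)) := by
  rw [← expect_magSlice_comp_equiv (Equiv.swap a b)]
  refine expect_congr rfl fun f _ ↦ ?_
  rw [prod_insert ha, prod_insert hb, Function.comp_apply, Equiv.swap_apply_right]
  congr 1
  refine prod_congr rfl fun i hi ↦ ?_
  rw [Function.comp_apply, Equiv.swap_apply_of_ne_of_ne] <;> (rintro rfl; contradiction)

lemma sum_compl_prod_insert {f : ι → Bool} (hf : f ∈ magSlice ι μ) (F : Finset ι) :
    ∑ l ∈ Fᶜ, ∏ i ∈ insert l F, (1 + spinVal (f i)) =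
      (Fintype.card ι * (1 + μ) - 2 * #F) * ∏ i ∈ F, (1 + spinVal (f i)) := by
  have sum_inside : ∑ l ∈ F, (1 + spinVal (f l)) * ∏ i ∈ F, (1 + spinVal (f i)) =
      2 * #F * ∏ i ∈ F, (1 + spinVal (f i)) := by
    calc ∑ l ∈ F, (1 + spinVal (f l)) * ∏ i ∈ F, (1 + spinVal (f i))
        = ∑ _l ∈ F, 2 * ∏ i ∈ F, (1 + spinVal (f i)) := by
          refine sum_congr rfl fun l hl ↦ ?_
          rw [← mul_prod_erase F _ hl, ← mul_assoc, one_add_spinVal_mul_self, mul_assoc]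
      _ = 2 * #F * ∏ i ∈ F, (1 + spinVal (f i)) := by
          rw [sum_const, nsmul_eq_mul]
          ring
  have sum_all : ∑ l, (1 + spinVal (f l)) = Fintype.card ι * (1 + μ) := by
    rw [sum_add_distrib, sum_spinVal_of_mem_magSlice hf]
    simp only [sum_const, card_univ, nsmul_eq_mul]
    ring
  calc ∑ l ∈ Fᶜ, ∏ i ∈ insert l F, (1 + spinVal (f i))
      = ∑ l ∈ Fᶜ, (1 + spinVal (f l)) * ∏ i ∈ F, (1 + spinVal (f i)) :=
        sum_congr rfl fun l hl ↦ prod_insert (mem_compl.1 hl)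
    _ = (Fintype.card ι * (1 + μ) - 2 * #F) * ∏ i ∈ F, (1 + spinVal (f i)) := by
        rw [sub_mul, ← sum_inside, ← sum_all, ← sum_mul, ← sum_mul, ← sub_mul,
          ← sum_add_sum_compl F, add_sub_cancel_left]

lemma card_sub_card_mul_expect_prod_insert {F : Finset ι} {a : ι} (ha : a ∉ F) :
    (Fintype.card ι - #F : ℝ) * 𝔼 f ∈ magSlice ι μ, ∏ i ∈ insert a F, (1 + spinVal (f i)) =
      (Fintype.card ι * (1 + μ) - 2 * #F) *
        𝔼 f ∈ magSlice ι μ, ∏ i ∈ F, (1 + spinVal (f i)) := by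
  calc (Fintype.card ι - #F : ℝ) * 𝔼 f ∈ magSlice ι μ, ∏ i ∈ insert a F, (1 + spinVal (f i))
      = ∑ l ∈ Fᶜ, 𝔼 f ∈ magSlice ι μ, ∏ i ∈ insert l F, (1 + spinVal (f i)) := by
        rw [sum_congr rfl fun l hl ↦ expect_prod_insert_eq ha (mem_compl.1 hl), sum_const,
          nsmul_eq_mul, card_compl, Nat.cast_sub (card_le_univ F)]
    _ = 𝔼 f ∈ magSlice ι μ, ∑ l ∈ Fᶜ, ∏ i ∈ insert l F, (1 + spinVal (f i)) :=
        (expect_sum_comm _ _ _).symm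
    _ = (Fintype.card ι * (1 + μ) - 2 * #F) *
          𝔼 f ∈ magSlice ι μ, ∏ i ∈ F, (1 + spinVal (f i)) := by
        rw [mul_expect]
        exact expect_congr rfl fun f hf ↦ sum_compl_prod_insert hf F

lemma expect_prod_insert_le (hμ : μ ≤ 1) {F : Finset ι} {a : ι} (ha : a ∉ F) :
    𝔼 f ∈ magSlice ι μ, ∏ i ∈ insert a F, (1 + spinVal (f i)) ≤
      (1 + μ) * 𝔼 f ∈ magSlice ι μ, ∏ i ∈ F, (1 + spinVal (f i)) := by
  have card_lt : (0 : ℝ) < Fintype.card ι - #F :=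
    sub_pos.2 (mod_cast card_lt_univ_of_notMem ha)
  have prod_expect_nonneg : 0 ≤ 𝔼 f ∈ magSlice ι μ, ∏ i ∈ F, (1 + spinVal (f i)) :=
    expect_nonneg fun f _ ↦ prod_nonneg fun i _ ↦ one_add_spinVal_nonneg (f i)
  refine le_of_mul_le_mul_left ?_ card_lt
  rw [card_sub_card_mul_expect_prod_insert ha, ← mul_assoc]
  refine mul_le_mul_of_nonneg_right ?_ prod_expect_nonneg
  nlinarith [Nat.cast_nonneg (α := ℝ) #F]

lemma expect_prod_one_add_spinVal_le (hμ : |μ| ≤ 1) (F : Finset ι) :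
    𝔼 f ∈ magSlice ι μ, ∏ i ∈ F, (1 + spinVal (f i)) ≤ (1 + μ) ^ #F := by
  obtain ⟨neg_one_le, le_one⟩ := abs_le.1 hμ
  induction F using Finset.induction_on with
  | empty =>
    rcases (magSlice ι μ).eq_empty_or_nonempty with hempty | hne
    · simp [hempty]
    · simp [expect_const hne]
  | insert a F ha ih =>
    rw [card_insert_of_notMem ha, pow_succ']
    exact (expect_prod_insert_le le_one ha).trans
      (mul_le_mul_of_nonneg_left ih (by linarith))

lemma expect_exp_mul_sum_spinVal_le_pow_of_nonneg (hμ : |μ| ≤ 1) {t : ℝ} (ht : 0 ≤ t)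
    (E : Finset ι) :
    𝔼 f ∈ magSlice ι μ, Real.exp (t * ∑ i ∈ E, spinVal (f i)) ≤
      (Real.cosh t + μ * Real.sinh t) ^ #E := by
  have expand (f : ι → Bool) : Real.exp (t * ∑ i ∈ E, spinVal (f i)) =
      ∑ F ∈ E.powerset, Real.sinh t ^ #F * Real.exp (-t) ^ (#E - #F) *
        ∏ i ∈ F, (1 + spinVal (f i)) := by
    simp only [mul_sum, Real.exp_sum, exp_mul_spinVal]
    rw [prod_add]
    refine sum_congr rfl fun F hF ↦ ?_
    rw [prod_mul_distrib, prod_const, prod_const, card_sdiff_of_subset (mem_powerset.1 hF)]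
    ring
  have : 0 ≤ Real.sinh t := Real.sinh_nonneg_iff.2 ht
  calc 𝔼 f ∈ magSlice ι μ, Real.exp (t * ∑ i ∈ E, spinVal (f i))
      = ∑ F ∈ E.powerset, Real.sinh t ^ #F * Real.exp (-t) ^ (#E - #F) *
          𝔼 f ∈ magSlice ι μ, ∏ i ∈ F, (1 + spinVal (f i)) := by
        simp only [expand, expect_sum_comm, mul_expect]
    _ ≤ ∑ F ∈ E.powerset, Real.sinh t ^ #F * Real.exp (-t) ^ (#E - #F) * (1 + μ) ^ #F := by
        gcongr with F
        exact expect_prod_one_add_spinVal_le hμ F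
    _ = ∑ F ∈ E.powerset, (Real.sinh t * (1 + μ)) ^ #F * Real.exp (-t) ^ (#E - #F) :=
        sum_congr rfl fun F _ ↦ by rw [mul_pow, mul_right_comm]
    _ = (Real.sinh t * (1 + μ) + Real.exp (-t)) ^ #E := sum_pow_mul_eq_add_pow _ _ E
    _ = (Real.cosh t + μ * Real.sinh t) ^ #E := by
        rw [← Real.cosh_sub_sinh]
        ring

lemma expect_exp_mul_sum_spinVal_le_pow (hμ : |μ| ≤ 1) (t : ℝ) (E : Finset ι) :
    𝔼 f ∈ magSlice ι μ, Real.exp (t * ∑ i ∈ E, spinVal (f i)) ≤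
      (Real.cosh t + μ * Real.sinh t) ^ #E := by
  rcases le_total 0 t with ht | ht
  · exact expect_exp_mul_sum_spinVal_le_pow_of_nonneg hμ ht E
  · have flipped := expect_exp_mul_sum_spinVal_le_pow_of_nonneg (μ := -μ) (by rwa [abs_neg])
      (neg_nonneg.2 ht) E
    rw [expect_magSlice_neg] at flipped
    simpa [spinVal_not] using flipped

lemma expect_exp_mul_sum_spinVal_le (hμ : |μ| ≤ 1) (t : ℝ) (E : Finset ι) :
    𝔼 f ∈ magSlice ι μ, Real.exp (t * ∑ i ∈ E, spinVal (f i)) ≤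
      Real.exp (#E * (t * μ + t ^ 2 / 2)) := by
  rw [Real.exp_nat_mul]
  obtain ⟨neg_one_le, le_one⟩ := abs_le.1 hμ
  have mgf_nonneg : 0 ≤ Real.cosh t + μ * Real.sinh t := by
    rw [Real.cosh_eq, Real.sinh_eq]
    nlinarith [Real.exp_pos t, Real.exp_pos (-t)]
  exact (expect_exp_mul_sum_spinVal_le_pow hμ t E).trans
    (pow_le_pow_left₀ mgf_nonneg (cosh_add_mul_sinh_le_exp hμ t) _)

end MagnetizationSlice

section Overlap

open Finset
open scoped BigOperators

/-- The overlap of two block configurations on the sites `E`. For `E = {i | ε i}` it is the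
paper's `S_ε`. -/
def overlap {ι : Type*} (E : Finset ι) (f g : ι → Bool) : ℝ :=
  ∑ i ∈ E, spinVal (f i) * spinVal (g i)

lemma overlap_le_card {ι : Type*} (E : Finset ι) (f g : ι → Bool) : overlap E f g ≤ #E := by
  refine (sum_le_card_nsmul E _ 1 fun i _ ↦ ?_).trans_eq (by simp)
  refine (le_abs_self _).trans_eq ?_
  rw [abs_mul, abs_spinVal, abs_spinVal, one_mul]

lemma sum_spinVal_mul_eq_sub {ι : Type*} (E : Finset ι) (f : ι → Bool) (h : ι → ℝ) :
    ∑ i ∈ E, spinVal (f i) * h i = ∑ i ∈ E with f i, h i - ∑ i ∈ E with ¬f i, h i := by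
  rw [sum_filter, sum_filter, ← sum_sub_distrib]
  exact sum_congr rfl fun i _ ↦ by cases f i <;> simp [spinVal]

variable {ι : Type*} [Fintype ι] [DecidableEq ι] {μ μ₁ μ₂ : ℝ}

lemma expect_exp_mul_overlap_le (hμ : |μ| ≤ 1) (t : ℝ) (E : Finset ι) (f : ι → Bool) :
    𝔼 g ∈ magSlice ι μ, Real.exp (t * overlap E f g) ≤
      Real.exp (t * μ * ∑ i ∈ E, spinVal (f i) + t ^ 2 * #E) := by
  let P : Finset ι := {i ∈ E | f i}
  let Q : Finset ι := {i ∈ E | ¬f i}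
  have card_split : (#E : ℝ) = #P + #Q := mod_cast (card_filter_add_card_filter_not _).symm
  have sum_split : ∑ i ∈ E, spinVal (f i) = #P - #Q := by
    simpa only [mul_one, sum_const, nsmul_eq_mul] using sum_spinVal_mul_eq_sub E f fun _ ↦ 1
  have exp_split (g : ι → Bool) : Real.exp (t * overlap E f g) =
      Real.exp (t * ∑ i ∈ P, spinVal (g i)) * Real.exp (-t * ∑ i ∈ Q, spinVal (g i)) := by
    rw [overlap, sum_spinVal_mul_eq_sub, ← Real.exp_add, mul_sub, neg_mul, ← sub_eq_add_neg]
  have expect_sq_le (s : ℝ) (D : Finset ι) :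
      𝔼 g ∈ magSlice ι μ, Real.exp (s * ∑ i ∈ D, spinVal (g i)) ^ 2 ≤
        Real.exp (#D * (2 * s * μ + 2 * s ^ 2)) := by
    convert expect_exp_mul_sum_spinVal_le hμ (2 * s) D using 2
    · rw [← Real.exp_nat_mul]
      push_cast
      ring_nf
    · ring
  refine le_of_sq_le_sq ?_ (Real.exp_pos _).le
  calc (𝔼 g ∈ magSlice ι μ, Real.exp (t * overlap E f g)) ^ 2
      ≤ (𝔼 g ∈ magSlice ι μ, Real.exp (t * ∑ i ∈ P, spinVal (g i)) ^ 2) *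
          𝔼 g ∈ magSlice ι μ, Real.exp (-t * ∑ i ∈ Q, spinVal (g i)) ^ 2 := by
        simp only [exp_split]
        exact expect_mul_sq_le_sq_mul_sq _ _ _
    _ ≤ Real.exp (#P * (2 * t * μ + 2 * t ^ 2)) * Real.exp (#Q * (2 * -t * μ + 2 * (-t) ^ 2)) :=
        mul_le_mul (expect_sq_le t P) (expect_sq_le (-t) Q)
          (expect_nonneg fun _ _ ↦ sq_nonneg _) (Real.exp_pos _).le
    _ = Real.exp (t * μ * ∑ i ∈ E, spinVal (f i) + t ^ 2 * #E) ^ 2 := by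
        rw [← Real.exp_add, ← Real.exp_nat_mul, sum_split, card_split]
        push_cast
        ring_nf

lemma expect_expect_exp_mul_overlap_le (hμ₁ : |μ₁| ≤ 1) (hμ₂ : |μ₂| ≤ 1) (t : ℝ)
    (E : Finset ι) :
    𝔼 f ∈ magSlice ι μ₁, 𝔼 g ∈ magSlice ι μ₂, Real.exp (t * overlap E f g) ≤
      Real.exp (#E * (t * (μ₁ * μ₂) + 3 / 2 * t ^ 2)) := by
  have sq_le : (t * μ₂) ^ 2 ≤ t ^ 2 := by
    rw [mul_pow]
    exact mul_le_of_le_one_right (sq_nonneg t) ((sq_le_one_iff_abs_le_one μ₂).2 hμ₂)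
  calc 𝔼 f ∈ magSlice ι μ₁, 𝔼 g ∈ magSlice ι μ₂, Real.exp (t * overlap E f g)
      ≤ 𝔼 f ∈ magSlice ι μ₁, Real.exp (t * μ₂ * ∑ i ∈ E, spinVal (f i) + t ^ 2 * #E) :=
        expect_le_expect fun f _ ↦ expect_exp_mul_overlap_le hμ₂ t E f
    _ = (𝔼 f ∈ magSlice ι μ₁, Real.exp (t * μ₂ * ∑ i ∈ E, spinVal (f i))) *
          Real.exp (t ^ 2 * #E) := by
        simp only [Real.exp_add, expect_mul]
    _ ≤ Real.exp (#E * (t * μ₂ * μ₁ + (t * μ₂) ^ 2 / 2)) * Real.exp (t ^ 2 * #E) := by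
        gcongr
        exact expect_exp_mul_sum_spinVal_le hμ₁ (t * μ₂) E
    _ ≤ Real.exp (#E * (t * μ₂ * μ₁ + t ^ 2 / 2)) * Real.exp (t ^ 2 * #E) := by gcongr
    _ = Real.exp (#E * (t * (μ₁ * μ₂) + 3 / 2 * t ^ 2)) := by
        rw [← Real.exp_add]
        ring_nf

lemma expect_expect_overlap (hne₁ : (magSlice ι μ₁).Nonempty) (hne₂ : (magSlice ι μ₂).Nonempty)
    (E : Finset ι) :
    𝔼 f ∈ magSlice ι μ₁, 𝔼 g ∈ magSlice ι μ₂, overlap E f g = #E * (μ₁ * μ₂) := by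
  simp only [overlap, expect_sum_comm, ← mul_expect, ← expect_mul, expect_spinVal hne₁,
    expect_spinVal hne₂, sum_const, nsmul_eq_mul]

lemma exp_le_expect_expect_exp_mul_overlap (hne₁ : (magSlice ι μ₁).Nonempty)
    (hne₂ : (magSlice ι μ₂).Nonempty) (a : ℝ) (E : Finset ι) :
    Real.exp (a * #E * (μ₁ * μ₂)) ≤
      𝔼 f ∈ magSlice ι μ₁, 𝔼 g ∈ magSlice ι μ₂, Real.exp (a * overlap E f g) := by
  set m : ℝ := a * #E * (μ₁ * μ₂) with hm
  have tangent_le (x : ℝ) : Real.exp m * (1 - m + x) ≤ Real.exp x := by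
    calc Real.exp m * (1 - m + x) ≤ Real.exp m * Real.exp (x - m) := by
          gcongr
          linarith [Real.add_one_le_exp (x - m)]
      _ = Real.exp x := by rw [← Real.exp_add, add_sub_cancel]
  calc Real.exp m
      = 𝔼 f ∈ magSlice ι μ₁, 𝔼 g ∈ magSlice ι μ₂,
          Real.exp m * (1 - m + a * overlap E f g) := by
        simp only [← mul_expect, expect_add_distrib, expect_const hne₁, expect_const hne₂,
          expect_expect_overlap hne₁ hne₂]
        rw [hm]
        ring
    _ ≤ _ := expect_le_expect fun f _ ↦ expect_le_expect fun g _ ↦ tangent_le _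

lemma expect_expect_exp_mul_overlap_le_add (hne₁ : (magSlice ι μ₁).Nonempty)
    (hne₂ : (magSlice ι μ₂).Nonempty) {a δ : ℝ} (ha : 0 ≤ a) (hδ : 0 ≤ δ) (E : Finset ι) :
    𝔼 f ∈ magSlice ι μ₁, 𝔼 g ∈ magSlice ι μ₂, Real.exp (a * overlap E f g) ≤
      Real.exp (a * #E * (μ₁ * μ₂) + δ * (a * #E)) +
        Real.exp (a * #E - δ ^ 2 / 6 * #E) := by
  have hμ₁ : |μ₁| ≤ 1 := abs_le_one_of_mem_magSlice hne₁.choose_spec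
  have hμ₂ : |μ₂| ≤ 1 := abs_le_one_of_mem_magSlice hne₂.choose_spec
  let t : ℝ := δ / 3
  let y : ℝ := #E * (μ₁ * μ₂ + δ)
  calc 𝔼 f ∈ magSlice ι μ₁, 𝔼 g ∈ magSlice ι μ₂, Real.exp (a * overlap E f g)
      ≤ 𝔼 f ∈ magSlice ι μ₁, 𝔼 g ∈ magSlice ι μ₂, (Real.exp (a * y) +
          Real.exp (a * #E - t * y) * Real.exp (t * overlap E f g)) :=
        expect_le_expect fun f _ ↦ expect_le_expect fun g _ ↦
          exp_mul_le_add_exp ha (by positivity) (overlap_le_card E f g)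
    _ = Real.exp (a * y) + Real.exp (a * #E - t * y) *
          𝔼 f ∈ magSlice ι μ₁, 𝔼 g ∈ magSlice ι μ₂, Real.exp (t * overlap E f g) := by
        simp only [expect_add_distrib, ← mul_expect, expect_const hne₁, expect_const hne₂]
    _ ≤ Real.exp (a * y) + Real.exp (a * #E - t * y) *
          Real.exp (#E * (t * (μ₁ * μ₂) + 3 / 2 * t ^ 2)) := by
        gcongr
        exact expect_expect_exp_mul_overlap_le hμ₁ hμ₂ t E
    _ = Real.exp (a * #E * (μ₁ * μ₂) + δ * (a * #E)) +
          Real.exp (a * #E - δ ^ 2 / 6 * #E) := by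
        rw [← Real.exp_add]
        simp only [t, y]
        ring_nf

end Overlap

section TwoBlocks

open Finset
open scoped BigOperators

variable {n : ℕ} {μ₁ μ₂ : ℝ}

lemma mag_eq_iff_mem_magSlice {σ : TwoConf n} :
    mag1 n σ = μ₁ ∧ mag2 n σ = μ₂ ↔
      σ.1 ∈ magSlice (Fin n) μ₁ ∧ σ.2 ∈ magSlice (Fin n) μ₂ := by
  have mag_eq (f : Fin n → Bool) :
      2 / (2 * n : ℝ) * ∑ i, spinVal (f i) = 𝔼 i, spinVal (f i) := by
    rw [Fintype.expect_eq_sum_div_card, Fintype.card_fin, div_mul_cancel_left₀ two_ne_zero,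
      inv_mul_eq_div]
  rw [mag1, mag2, mag_eq, mag_eq, mem_magSlice, mem_magSlice]

lemma nuExp_eq_expect_expect (φ : TwoConf n → ℝ) :
    nuExp n μ₁ μ₂ φ =
      𝔼 f ∈ magSlice (Fin n) μ₁, 𝔼 g ∈ magSlice (Fin n) μ₂, φ (f, g) := by
  have sum_indicator (ψ : TwoConf n → ℝ) :
      ∑ σ, {σ : TwoConf n | mag1 n σ = μ₁ ∧ mag2 n σ = μ₂}.indicator ψ σ =
        ∑ σ ∈ magSlice (Fin n) μ₁ ×ˢ magSlice (Fin n) μ₂, ψ σ := by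
    classical
    simp only [Set.indicator_apply, Set.mem_ofPred_eq, mag_eq_iff_mem_magSlice, ← mem_product,
      sum_ite_mem, univ_inter]
  rw [nuExp, sum_indicator, sum_indicator, ← expect_product, expect_eq_sum_div_card]
  simp

lemma sum_ite_mul_eq_overlap (ε : Fin n → Bool) (σ : TwoConf n) :
    ∑ i, (if ε i then (1 : ℝ) else 0) * (spinVal (σ.1 i) * spinVal (σ.2 i)) =
      overlap {i | ε i = true} σ.1 σ.2 := by
  simp only [overlap, sum_filter, ite_mul, one_mul, zero_mul]

lemma exists_mag_eq_of_admissible (hn : n ≠ 0) (hμ₁ : μ₁ ≤ 1) (hμ₂ : μ₂ ≤ 1)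
    (hadm : admissible (2 * n) μ₁ μ₂) : ∃ σ, mag1 n σ = μ₁ ∧ mag2 n σ = μ₂ := by
  have : NeZero n := ⟨hn⟩
  have slice_nonempty {μ : ℝ} {k : ℕ} (hk : ((2 * n : ℕ) : ℝ) * (1 + μ) / 4 = k) (hμ : μ ≤ 1) :
      (magSlice (Fin n) μ).Nonempty := by
    refine magSlice_nonempty (k := k) ?_ hμ
    rw [← hk, Fintype.card_fin]
    push_cast
    ring
  obtain ⟨⟨k₁, hk₁⟩, k₂, hk₂⟩ := hadm
  obtain ⟨f, hf⟩ := slice_nonempty hk₁ hμ₁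
  obtain ⟨g, hg⟩ := slice_nonempty hk₂ hμ₂
  exact ⟨(f, g), mag_eq_iff_mem_magSlice.2 ⟨hf, hg⟩⟩

lemma eventually_le_one_of_memTyp {mp κ : ℝ} (hmp : |mp| < 1) (hκ : 0 < κ) :
    ∀ᶠ N : ℕ in atTop, ∀ x : ℝ × ℝ, memTyp mp κ N x → x.1 ≤ 1 ∧ x.2 ≤ 1 := by
  have width_tendsto : Tendsto (fun N : ℕ ↦ (N : ℝ) ^ (-κ)) atTop (nhds 0) :=
    (tendsto_rpow_neg_atTop hκ).comp tendsto_natCast_atTop_atTop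
  filter_upwards [width_tendsto.eventually_lt_const (sub_pos.2 hmp)] with N hN
  have le_one {μ : ℝ} {s : Bool} (h : |μ - if s then mp else -mp| < (N : ℝ) ^ (-κ)) : μ ≤ 1 := by
    have center_le : (if s then mp else -mp) ≤ |mp| := by
      cases s <;> simp [le_abs_self, neg_le_abs]
    linarith [le_abs_self (μ - if s then mp else -mp)]
  rintro x ⟨s₁, s₂, h₁, h₂⟩
  exact ⟨le_one h₁, le_one h₂⟩

lemma exists_forall_mag_eq_of_memTyp {mp κ : ℝ} (hmp : |mp| < 1) (hκ : 0 < κ) :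
    ∃ N₀ : ℕ, ∀ n : ℕ, N₀ ≤ 2 * n → ∀ μ₁ μ₂ : ℝ, memTyp mp κ (2 * n) (μ₁, μ₂) →
      admissible (2 * n) μ₁ μ₂ → ∃ σ, mag1 n σ = μ₁ ∧ mag2 n σ = μ₂ := by
  obtain ⟨N₀, hN₀⟩ := eventually_atTop.1
    ((eventually_le_one_of_memTyp hmp hκ).and (eventually_gt_atTop 0))
  refine ⟨N₀, fun n hn μ₁ μ₂ hmem hadm ↦ ?_⟩
  obtain ⟨le_one, pos⟩ := hN₀ (2 * n) hn
  obtain ⟨hμ₁, hμ₂⟩ := le_one _ hmem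
  exact exists_mag_eq_of_admissible (by omega) hμ₁ hμ₂ hadm

end TwoBlocks

theorem quenched_tilted_expectation_bounds_general {n : ℕ} {μ₁ μ₂ : ℝ}
    (hΩ : ∃ σ, mag1 n σ = μ₁ ∧ mag2 n σ = μ₂) {a δ : ℝ} (ha : 0 ≤ a) (hδ : 0 ≤ δ)
    (ε : Fin n → Bool) {M : ℝ}
    (hM : M = ((Finset.univ.filter fun i => ε i = true).card : ℝ)) :
    Real.exp (a * M * (μ₁ * μ₂) - δ * (a * M)) * (1 - Real.exp (-(δ ^ 2 / 6) * M))
      ≤ nuExp n μ₁ μ₂ (fun σ =>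
          Real.exp (a * ∑ i, (if ε i then (1 : ℝ) else 0) *
            (spinVal (σ.1 i) * spinVal (σ.2 i)))) ∧
    nuExp n μ₁ μ₂ (fun σ =>
          Real.exp (a * ∑ i, (if ε i then (1 : ℝ) else 0) *
            (spinVal (σ.1 i) * spinVal (σ.2 i))))
      ≤ Real.exp (a * M * (μ₁ * μ₂) + δ * (a * M)) + Real.exp (a * M - δ ^ 2 / 6 * M) := by
  obtain ⟨σ, hσ⟩ := hΩ
  obtain ⟨hσ₁, hσ₂⟩ := mag_eq_iff_mem_magSlice.1 hσ
  simp only [sum_ite_mul_eq_overlap, nuExp_eq_expect_expect]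
  subst hM
  constructor
  · refine le_trans ?_ (exp_le_expect_expect_exp_mul_overlap ⟨_, hσ₁⟩ ⟨_, hσ₂⟩ a _)
    refine (mul_le_of_le_one_right (Real.exp_pos _).le ?_).trans (Real.exp_le_exp.2 ?_)
    · exact sub_le_self _ (Real.exp_pos _).le
    · exact sub_le_self _ (by positivity)
  · exact expect_expect_exp_mul_overlap_le_add ⟨_, hσ₁⟩ ⟨_, hσ₂⟩ ha hδ _

/-- Corollary (quenched tilted expectation bounds): for `β > 2`, `0 < κ < 1/2`, and
`α_N > 0`, for every `δ > 0` there are `c_δ > 0` and `N₀` such that for all even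
`N = 2n ≥ N₀`, all admissible `(μ₁, μ₂) ∈ A_κ^N` and every `ε ∈ {0,1}^{B₁}` with
`M_N = ∑_{i∈B₁} ε_i ≥ 1`, writing `S_ε(σ) = ∑_{i∈B₁} ε_i σᵢσ_{i+N/2}`,
`exp(α_N M_N μ₁μ₂ − δ α_N M_N)(1 − exp(−c_δ M_N)) ≤ E_{ν_N^{μ₁,μ₂}}[exp(α_N S_ε)]
  ≤ exp(α_N M_N μ₁μ₂ + δ α_N M_N) + exp(α_N M_N − c_δ M_N)`. -/
theorem quenched_tilted_expectation_bounds (β κ : ℝ) (hβ : 2 < β) (hκ0 : 0 < κ)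
    (hκ : κ < 1 / 2) (mp : ℝ) (hfix : mp = Real.tanh (β / 2 * mp))
    (hmax : ∀ z : ℝ, z = Real.tanh (β / 2 * z) → z ≤ mp)
    (α : ℕ → ℝ) (hαpos : ∀ N, 0 < α N) :
    ∀ δ : ℝ, 0 < δ →
      ∃ c : ℝ, 0 < c ∧ ∃ N₀ : ℕ, ∀ n : ℕ, N₀ ≤ 2 * n →
        ∀ μ₁ μ₂ : ℝ, memTyp mp κ (2 * n) (μ₁, μ₂) → admissible (2 * n) μ₁ μ₂ →
          ∀ ε : Fin n → Bool,
            ∀ M : ℝ, M = ((Finset.univ.filter fun i => ε i = true).card : ℝ) → 1 ≤ M →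
              Real.exp (α (2 * n) * M * (μ₁ * μ₂) - δ * (α (2 * n) * M)) *
                  (1 - Real.exp (-c * M))
                ≤ nuExp n μ₁ μ₂ (fun σ =>
                    Real.exp (α (2 * n) *
                      ∑ i, (if ε i then (1 : ℝ) else 0) *
                        (spinVal (σ.1 i) * spinVal (σ.2 i)))) ∧
              nuExp n μ₁ μ₂ (fun σ =>
                    Real.exp (α (2 * n) *
                      ∑ i, (if ε i then (1 : ℝ) else 0) *
                        (spinVal (σ.1 i) * spinVal (σ.2 i))))
                ≤ Real.exp (α (2 * n) * M * (μ₁ * μ₂) + δ * (α (2 * n) * M)) +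
                    Real.exp (α (2 * n) * M - c * M) := by
  intro δ hδ
  obtain ⟨N₀, hN₀⟩ := exists_forall_mag_eq_of_memTyp (hfix ▸ Real.abs_tanh_lt_one _ : |mp| < 1) hκ0
  exact ⟨δ ^ 2 / 6, by positivity, N₀, fun n hn μ₁ μ₂ hmem hadm ε M hM _ ↦
    quenched_tilted_expectation_bounds_general (hN₀ n hn μ₁ μ₂ hmem hadm) (hαpos _).le hδ.le ε hM⟩

end
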